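/- arXiv:2507.22178 — 3 statements merged into one kernel-verified Lean document; each statement's English description precedes it below -/
import Mathlib

section
/- Let c > 0, let ξ satisfy 0 < ξ < 1/c, and let Λ : ℕ → ℝ satisfy 0 ≤ Λ(2) ≤ Λ(j) for all j ≥ 2. Assume that the sum Σ_{j ≥ 2} (c·ξ)^{Λ(j)} is finite. Then there exists a constant γ₂ ≥ 0 such that for all ε ∈ (0, ξ], Σ_{j ≥ 2} (c·ε)^{Λ(j)} = Σ_{j ≥ 2} ε^{Λ(j)} · c^{Λ(j)} ≤ γ₂ · ε^{Λ(2)}. -/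
open scoped ENNReal

/-- If `Λ(2) ≤ Λ(j)` for `j ≥ 2`, `0 ≤ Λ(2)`, and `Σ_{j≥2} (cξ)^{Λ(j)}` is finite for
some `ξ < 1/c`, then for all `ε ∈ (0, ξ]`,
`Σ_{j≥2} (cε)^{Λ(j)} = Σ_{j≥2} ε^{Λ(j)} c^{Λ(j)} ≤ γ₂ ε^{Λ(2)}`. -/
theorem stmt6 (c ξ : ℝ) (hc : 0 < c) (hξ : 0 < ξ) (hξc : ξ < 1 / c)
    (Λ : ℕ → ℝ) (hΛ0 : 0 ≤ Λ 2) (hΛ : ∀ j : ℕ, 2 ≤ j → Λ 2 ≤ Λ j)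
    (hsum : (∑' j : {j : ℕ // 2 ≤ j}, ENNReal.ofReal ((c * ξ) ^ Λ j.1)) ≠ ⊤) :
    ∃ γ₂ : ℝ, 0 ≤ γ₂ ∧ ∀ ε : ℝ, ε ∈ Set.Ioc 0 ξ →
      (∑' j : {j : ℕ // 2 ≤ j}, ENNReal.ofReal ((c * ε) ^ Λ j.1)) =
        (∑' j : {j : ℕ // 2 ≤ j}, ENNReal.ofReal (ε ^ Λ j.1 * c ^ Λ j.1)) ∧
      (∑' j : {j : ℕ // 2 ≤ j}, ENNReal.ofReal ((c * ε) ^ Λ j.1)) ≤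
        ENNReal.ofReal (γ₂ * ε ^ Λ 2) := by
  set S := ∑' j : {j : ℕ // 2 ≤ j}, ENNReal.ofReal ((c * ξ) ^ Λ j.1) with hS
  refine ⟨S.toReal * (ξ ^ Λ 2)⁻¹, by positivity, ?_⟩
  rintro ε ⟨hε, hεξ⟩
  constructor
  · refine tsum_congr fun j => ?_
    rw [Real.mul_rpow hc.le hε.le, mul_comm]
  · have hq : 0 < ε / ξ := div_pos hε hξ
    have hq1 : ε / ξ ≤ 1 := (div_le_one hξ).2 hεξ
    have key : ∀ j : {j : ℕ // 2 ≤ j}, ENNReal.ofReal ((c * ε) ^ Λ j.1) ≤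
        ENNReal.ofReal ((c * ξ) ^ Λ j.1) * ENNReal.ofReal ((ε / ξ) ^ Λ 2) := by
      intro j
      rw [← ENNReal.ofReal_mul (by positivity)]
      apply ENNReal.ofReal_le_ofReal
      have h1 : c * ε = (c * ξ) * (ε / ξ) := by field_simp
      rw [h1, Real.mul_rpow (by positivity) hq.le]
      exact mul_le_mul_of_nonneg_left
        (Real.rpow_le_rpow_of_exponent_ge hq hq1 (hΛ j.1 j.2)) (by positivity)
    refine (ENNReal.tsum_le_tsum key).trans (le_of_eq ?_)
    rw [ENNReal.tsum_mul_right, ← hS, mul_assoc, ENNReal.ofReal_mul ENNReal.toReal_nonneg,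
      ENNReal.ofReal_toReal hsum, Real.div_rpow hε.le hξ.le, div_eq_inv_mul]
end

section
/- Let λ ∈ ℝ, let m ≥ 1 be an integer, and define h : ℂ ∖ (−∞, 0] → ℝ by h(z) := Re(z^λ) (principal complex power). Then for every z ∈ ℂ ∖ (−∞, 0], h is m times differentiable at z and the operator norm of its m-th Fréchet derivative, viewed as an ℝ-multilinear map on ℂ ≅ ℝ², equals ‖D^m h(z)‖ = (∏_{k=0}^{m−1} |λ − k|) · ‖z‖^{λ − m}. -/
theorem stmt8_aux_iter (a : ℂ) (m : ℕ) : ∀ z ∈ Complex.slitPlane,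
    iteratedDeriv m (fun w : ℂ => w ^ a) z =
      (∏ k ∈ Finset.range m, (a - (k : ℂ))) * z ^ (a - m) := by
  induction m with
  | zero => intro z hz; simp
  | succ m ih =>
    intro z hz
    rw [iteratedDeriv_succ]
    have hev : iteratedDeriv m (fun w : ℂ => w ^ a) =ᶠ[nhds z]
        fun w => (∏ k ∈ Finset.range m, (a - (k : ℂ))) * w ^ (a - m) := by
      filter_upwards [Complex.isOpen_slitPlane.mem_nhds hz] with w hw using ih w hw
    rw [hev.deriv_eq]
    have h1 : HasDerivAt (fun w : ℂ => w ^ (a - m)) ((a - m) * z ^ (a - m - 1) * 1) z :=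
      (hasDerivAt_id z).cpow_const hz
    rw [(h1.const_mul _).deriv, Finset.prod_range_succ]
    push_cast
    rw [sub_sub]
    ring

theorem stmt8 (lam : ℝ) (m : ℕ) (hm : 1 ≤ m) (z : ℂ) (hz : z ∈ Complex.slitPlane) :
    ContDiffAt ℝ m (fun w : ℂ => (w ^ (lam : ℂ)).re) z ∧
      ‖iteratedFDeriv ℝ m (fun w : ℂ => (w ^ (lam : ℂ)).re) z‖ =
        (∏ k ∈ Finset.range m, |lam - (k : ℝ)|) * ‖z‖ ^ (lam - m) := by
  have hf : ContDiffAt ℂ m (fun w : ℂ => w ^ (lam : ℂ)) z := by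
    have : AnalyticAt ℂ (fun w : ℂ => w ^ (lam : ℂ)) z :=
      analyticAt_id.cpow analyticAt_const hz
    exact this.contDiffAt
  have hfR : ContDiffAt ℝ m (fun w : ℂ => w ^ (lam : ℂ)) z := hf.restrict_scalars ℝ
  have hz0 : z ≠ 0 := Complex.slitPlane_ne_zero hz
  refine ⟨Complex.reCLM.contDiff.contDiffAt.comp z hfR, ?_⟩
  set c : ℂ := (∏ k ∈ Finset.range m, ((lam : ℂ) - (k : ℂ))) * z ^ ((lam : ℂ) - m) with hc
  have hcn : ‖c‖ = (∏ k ∈ Finset.range m, |lam - (k : ℝ)|) * ‖z‖ ^ (lam - m) := by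
    rw [hc, norm_mul, norm_prod]
    congr 1
    · refine Finset.prod_congr rfl fun k _ => ?_
      rw [← Real.norm_eq_abs, ← Complex.norm_real]; push_cast; rfl
    · have : ((lam : ℂ) - m) = ((lam - m : ℝ) : ℂ) := by push_cast; rfl
      rw [this, Complex.norm_cpow_real]
  have key : ∀ v : Fin m → ℂ,
      iteratedFDeriv ℝ m (fun w : ℂ => (w ^ (lam : ℂ)).re) z v = ((∏ i, v i) * c).re := by
    intro v
    have h1 := Complex.reCLM.iteratedFDeriv_comp_left hfR (i := m) le_rfl
    have h2 : (fun w : ℂ => (w ^ (lam : ℂ)).re) = Complex.reCLM ∘ (fun w : ℂ => w ^ (lam : ℂ)) := rfl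
    rw [h2, h1, ← hf.restrictScalars_iteratedFDeriv (𝕜 := ℝ)]
    simp [iteratedFDeriv_apply_eq_iteratedDeriv_mul_prod, stmt8_aux_iter _ _ z hz, hc]
  rw [← hcn]
  apply le_antisymm
  · refine ContinuousMultilinearMap.opNorm_le_bound (norm_nonneg _) fun v => ?_
    rw [key, Real.norm_eq_abs]
    refine (Complex.abs_re_le_norm _).trans ?_
    rw [norm_mul, norm_prod, mul_comm]
  · by_cases h0 : c = 0
    · rw [h0, norm_zero]; exact norm_nonneg _
    have hcpos : 0 < ‖c‖ := norm_pos_iff.mpr h0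
    have h := (iteratedFDeriv ℝ m (fun w : ℂ => (w ^ (lam : ℂ)).re) z).le_opNorm
      (Function.update (fun _ => 1) ⟨0, hm⟩ ((starRingEnd ℂ) c))
    rw [key, ← norm_prod, Finset.prod_update_of_mem (Finset.mem_univ _)] at h
    simp only [Finset.prod_const_one, mul_one, RCLike.norm_conj] at h
    rw [mul_comm ((starRingEnd ℂ) c), Complex.mul_conj, Complex.ofReal_re,
      Complex.normSq_eq_norm_sq, Real.norm_of_nonneg (sq_nonneg _), sq] at h
    exact le_of_mul_le_mul_right h hcpos
end

section
/- Let ω ∈ (0, 2π), let λ > 0 be a real number that is not an integer, let m ≥ 1 be an integer and p ∈ [1, ∞). Define h : ℂ ∖ (−∞, 0] → ℝ by h(z) := Re(z^λ) (principal complex power). Then the function z ↦ ‖D^m h(z)‖^p is Lebesgue-integrable on S_ω ∩ B(0, 1) (the intersection of the sector with the open unit disc) if and only if (λ − m)·p + 2 > 0, i.e. if and only if λ > m − 2/p. -/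
open Real MeasureTheory

theorem aux_formula (lam : ℝ) (m : ℕ) : ∀ z ∈ Complex.slitPlane, ∀ v : Fin m → ℂ,
    iteratedFDeriv ℝ m (fun w : ℂ => (w ^ (lam : ℂ)).re) z v =
      (((∏ i ∈ Finset.range m, (lam - i) : ℝ) : ℂ) * z ^ ((lam - m : ℝ) : ℂ) * ∏ i, v i).re := by
  induction m with
  | zero => intro z hz v; simp
  | succ n ih =>
    intro z hz v
    have hcd : ContDiffAt ℝ ((n + 1 : ℕ) : WithTop ℕ∞) (fun w : ℂ => (w ^ (lam : ℂ)).re) z := by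
      have h1 : AnalyticAt ℂ (fun w : ℂ => w ^ (lam : ℂ)) z :=
        analyticAt_id.cpow analyticAt_const hz
      have h2 : ContDiffAt ℝ ((n + 1 : ℕ) : WithTop ℕ∞) (fun w : ℂ => w ^ (lam : ℂ)) z :=
        (h1.contDiffAt).restrict_scalars ℝ
      exact Complex.reCLM.contDiff.contDiffAt.comp z h2
    have hd := hcd.differentiableAt_iteratedFDeriv (m := n) (by norm_cast; omega)
    rw [iteratedFDeriv_succ_apply_left, ← fderiv_continuousMultilinear_apply_const_apply hd]
    have heq : (fun y => iteratedFDeriv ℝ n (fun w : ℂ => (w ^ (lam : ℂ)).re) y (Fin.tail v))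
        =ᶠ[nhds z] fun y => (((∏ i ∈ Finset.range n, (lam - i) : ℝ) : ℂ) *
          y ^ ((lam - n : ℝ) : ℂ) * ∏ i, Fin.tail v i).re := by
      filter_upwards [Complex.isOpen_slitPlane.mem_nhds hz] with y hy
      exact ih y hy _
    rw [heq.fderiv_eq]
    have hD : HasDerivAt (fun y : ℂ => ((∏ i ∈ Finset.range n, (lam - i) : ℝ) : ℂ) *
          y ^ ((lam - n : ℝ) : ℂ) * ∏ i, Fin.tail v i)
          (((∏ i ∈ Finset.range n, (lam - i) : ℝ) : ℂ) *
          (((lam - n : ℝ) : ℂ) * z ^ (((lam - n : ℝ) : ℂ) - 1) * 1) * ∏ i, Fin.tail v i) z :=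
      (((hasDerivAt_id z).cpow_const hz).const_mul _).mul_const _
    have hF := Complex.reCLM.hasFDerivAt.comp z (hD.hasFDerivAt.restrictScalars ℝ)
    have hF' := hF.fderiv
    simp only [Function.comp_def, Complex.reCLM_apply] at hF'
    rw [hF']
    have he : ((lam - n : ℝ) : ℂ) - 1 = ((lam - (n + 1 : ℕ) : ℝ) : ℂ) := by push_cast; ring
    rw [he, Finset.prod_range_succ, Fin.prod_univ_succ]
    simp only [ContinuousLinearMap.comp_apply, Complex.reCLM_apply,
      ContinuousLinearMap.coe_restrictScalars', ContinuousLinearMap.toSpanSingleton_apply,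
      smul_eq_mul, Fin.tail]
    congr 1
    push_cast
    ring

theorem aux_norm (lam : ℝ) (m : ℕ) (hm : 1 ≤ m) (z : ℂ) (hz : z ∈ Complex.slitPlane) :
    ‖iteratedFDeriv ℝ m (fun w : ℂ => (w ^ (lam : ℂ)).re) z‖ =
      |∏ i ∈ Finset.range m, (lam - i)| * ‖z‖ ^ (lam - m) := by
  have hA : ‖((∏ i ∈ Finset.range m, (lam - i) : ℝ) : ℂ) * z ^ ((lam - m : ℝ) : ℂ)‖ =
      |∏ i ∈ Finset.range m, (lam - i)| * ‖z‖ ^ (lam - m) := by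
    rw [norm_mul, Complex.norm_real, Complex.norm_cpow_real, Real.norm_eq_abs]
  rw [← hA]
  set A : ℂ := ((∏ i ∈ Finset.range m, (lam - i) : ℝ) : ℂ) * z ^ ((lam - m : ℝ) : ℂ) with hAdef
  apply le_antisymm
  · refine ContinuousMultilinearMap.opNorm_le_bound (norm_nonneg _) fun v => ?_
    rw [aux_formula lam m z hz v, ← hAdef]
    calc ‖(A * ∏ i, v i).re‖ ≤ ‖A * ∏ i, v i‖ := Complex.abs_re_le_norm _
      _ = _ := by rw [norm_mul, norm_prod]
  · by_cases hA0 : A = 0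
    · rw [hA0]; simp
    obtain ⟨k, rfl⟩ : ∃ k, m = k + 1 := ⟨m - 1, by omega⟩
    have hn : (‖A‖ : ℂ) ≠ 0 := by simpa using hA0
    let v : Fin (k + 1) → ℂ := Fin.cons ((‖A‖ : ℂ) / A) (fun _ => 1)
    have h := (iteratedFDeriv ℝ (k + 1) (fun w : ℂ => (w ^ (lam : ℂ)).re) z).le_opNorm v
    rw [aux_formula lam (k + 1) z hz v, ← hAdef] at h
    have hnA : ‖A‖ ≠ 0 := by simpa using hA0
    simpa [v, Fin.prod_univ_succ, mul_div_cancel₀, hA0, hnA] using h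

theorem aux_int (ω : ℝ) (hω : ω ∈ Set.Ioo 0 (2 * π)) (s : ℝ) :
    IntegrableOn (fun z : ℂ => ‖z‖ ^ s)
      ({z : ℂ | z ≠ 0 ∧ |z.arg| < ω / 2} ∩ Metric.ball 0 1) volume ↔ 0 < s + 2 := by
  have hS : MeasurableSet ({z : ℂ | z ≠ 0 ∧ |z.arg| < ω / 2} ∩ Metric.ball 0 1) := by
    refine MeasurableSet.inter (MeasurableSet.inter ?_ ?_) measurableSet_ball
    · exact (measurableSet_singleton (0 : ℂ)).compl
    · exact measurableSet_lt (f := fun z : ℂ => |z.arg|) (g := fun _ => ω / 2)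
        (Complex.measurable_arg.norm) measurable_const
  have hmeas : Measurable (fun z : ℂ => ‖z‖ ^ s) := by fun_prop
  have h1 : (∫⁻ z in ({z : ℂ | z ≠ 0 ∧ |z.arg| < ω / 2} ∩ Metric.ball 0 1),
      ENNReal.ofReal ‖‖z‖ ^ s‖) =
      (∫⁻ r in Set.Ioo (0 : ℝ) 1, ENNReal.ofReal ‖r ^ (s + 1)‖) * ENNReal.ofReal ω := by
    have hvol : ENNReal.ofReal ω = ∫⁻ _θ in Set.Ioo (-(ω / 2)) (ω / 2), 1 := by
      rw [setLIntegral_one, Real.volume_Ioo]; congr 1; ring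
    rw [hvol, ← lintegral_indicator hS, ← Complex.lintegral_comp_polarCoord_symm,
      ← lintegral_prod_mul (by fun_prop) (by fun_prop), Measure.prod_restrict,
      ← Measure.volume_eq_prod,
      ← lintegral_indicator (measurableSet_Ioo.prod measurableSet_Ioo),
      ← lintegral_indicator polarCoord.open_target.measurableSet]
    congr 1
    ext ⟨r, θ⟩
    by_cases hT : (r, θ) ∈ polarCoord.target
    · have hT' := hT
      rw [polarCoord_target] at hT'
      obtain ⟨hr, hθ⟩ := hT'
      simp only [Set.mem_Ioi] at hr
      have harg : (Complex.polarCoord.symm (r, θ)).arg = θ := by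
        rw [Complex.polarCoord_symm_apply]
        simpa using Complex.arg_mul_cos_add_sin_mul_I hr ⟨hθ.1, hθ.2.le⟩
      have hnorm : ‖Complex.polarCoord.symm (r, θ)‖ = r := by
        rw [Complex.norm_polarCoord_symm]; exact abs_of_pos hr
      have hne : Complex.polarCoord.symm (r, θ) ≠ 0 := by
        rw [← norm_ne_zero_iff, hnorm]; exact hr.ne'
      have hiff : Complex.polarCoord.symm (r, θ) ∈
          ({z : ℂ | z ≠ 0 ∧ |z.arg| < ω / 2} ∩ Metric.ball 0 1) ↔
          (r, θ) ∈ Set.Ioo (0 : ℝ) 1 ×ˢ Set.Ioo (-(ω / 2)) (ω / 2) := by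
        rw [Set.mem_inter_iff, Set.mem_setOf_eq, harg, mem_ball_zero_iff, hnorm, Set.mem_prod,
          Set.mem_Ioo, Set.mem_Ioo, abs_lt]
        simp only [hr, true_and, hne, ne_eq, not_false_eq_true]
        tauto
      rw [Set.indicator_of_mem hT]
      by_cases hm : (r, θ) ∈ Set.Ioo (0 : ℝ) 1 ×ˢ Set.Ioo (-(ω / 2)) (ω / 2)
      · rw [Set.indicator_of_mem hm, Set.indicator_of_mem (hiff.2 hm), hnorm]
        simp only [smul_eq_mul, mul_one]
        rw [← ENNReal.ofReal_mul hr.le, Real.rpow_add_one hr.ne', norm_mul,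
          Real.norm_of_nonneg hr.le, mul_comm]
      · rw [Set.indicator_of_notMem hm, Set.indicator_of_notMem (fun h => hm (hiff.1 h))]
        simp
    · rw [Set.indicator_of_notMem hT, Set.indicator_of_notMem]
      intro h
      apply hT
      rw [polarCoord_target]
      obtain ⟨h1, h2⟩ := h
      simp only [Set.mem_Ioo] at h1 h2
      exact ⟨h1.1, by constructor <;> simp only <;> linarith [hω.1, hω.2]⟩
  have h2 : IntegrableOn (fun r : ℝ => r ^ (s + 1)) (Set.Ioo 0 1) volume ↔ -1 < s + 1 :=
    intervalIntegral.integrableOn_Ioo_rpow_iff one_pos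
  have hω0 : ENNReal.ofReal ω ≠ 0 := by simpa using hω.1
  have h3 : (0 < s + 2) ↔ -1 < s + 1 := by constructor <;> intro h <;> linarith
  rw [h3, ← h2, IntegrableOn, IntegrableOn, Integrable, Integrable,
    and_iff_right hmeas.aestronglyMeasurable,
    and_iff_right (Measurable.aestronglyMeasurable (by fun_prop)),
    hasFiniteIntegral_iff_norm, hasFiniteIntegral_iff_norm, h1]
  constructor
  · intro h
    exact ENNReal.lt_top_of_mul_ne_top_left h.ne hω0
  · intro h
    exact ENNReal.mul_lt_top h ENNReal.ofReal_lt_top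

/-- `W^{m,p}` membership criterion near the corner: for `λ > 0` non-integer,
`‖D^m Re(z^λ)‖^p` is integrable on `S_ω ∩ B(0,1)` iff `(λ − m)p + 2 > 0`. -/
theorem stmt9 (ω : ℝ) (hω : ω ∈ Set.Ioo 0 (2 * π))
    (lam : ℝ) (hlam : 0 < lam) (hlam' : ∀ k : ℤ, lam ≠ (k : ℝ))
    (m : ℕ) (hm : 1 ≤ m) (p : ℝ) (hp : 1 ≤ p) :
    IntegrableOn
        (fun z : ℂ => ‖iteratedFDeriv ℝ m (fun w : ℂ => (w ^ (lam : ℂ)).re) z‖ ^ p)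
        ({z : ℂ | z ≠ 0 ∧ |z.arg| < ω / 2} ∩ Metric.ball 0 1) volume ↔
      0 < (lam - m) * p + 2 := by
  have hS : MeasurableSet ({z : ℂ | z ≠ 0 ∧ |z.arg| < ω / 2} ∩ Metric.ball 0 1) := by
    refine MeasurableSet.inter (MeasurableSet.inter ?_ ?_) measurableSet_ball
    · exact (measurableSet_singleton (0 : ℂ)).compl
    · exact measurableSet_lt (f := fun z : ℂ => |z.arg|) (g := fun _ => ω / 2)
        (Complex.measurable_arg.norm) measurable_const
  have hc : 0 < |∏ i ∈ Finset.range m, (lam - i)| := by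
    rw [abs_pos, Finset.prod_ne_zero_iff]
    intro i _
    have := hlam' i
    rw [sub_ne_zero]
    exact_mod_cast this
  rw [← aux_int ω hω, integrableOn_congr_fun (g := fun z : ℂ =>
    |∏ i ∈ Finset.range m, (lam - i)| ^ p * ‖z‖ ^ ((lam - m) * p)) ?_ hS]
  · exact integrable_const_mul_iff (IsUnit.mk0 _ (Real.rpow_pos_of_pos hc p).ne') _
  · rintro z ⟨⟨hz0, hz⟩, _⟩
    have hsl : z ∈ Complex.slitPlane := by
      rw [Complex.mem_slitPlane_iff_arg]
      refine ⟨fun h => ?_, hz0⟩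
      rw [h, abs_of_pos Real.pi_pos] at hz
      linarith [hω.2]
    simp only
    rw [aux_norm lam m hm z hsl, Real.mul_rpow hc.le (by positivity), ← Real.rpow_mul (norm_nonneg _)]
end
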